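/- Let n ≥ 2 be an integer and let ψ : [0,∞) → ℝ be a warping function satisfying the Cartan–Hadamard conditions. Then the function f(r) = (∫₀^r ψ(t)^{n−1} dt)/rⁿ is monotone nondecreasing on (0,∞), and consequently the isoperimetric quotient I(r) = ψ(r)^{n−1} / ∫₀^r ψ(t)^{n−1} dt satisfies I(r) ≥ n/r for all r > 0. -/

import Mathlib

/-! Convexity and `ψ 0 = 0` make `ψ t / t` nondecreasing, hence so is `g t / t ^ p` for
`g = ψ ^ p` and `p = n - 1`. Rescaling the interval of integration gives
`(∫₀^r g) / r ^ (p + 1) = ∫₀^1 g (r s) / r ^ p ds`, whose integrand is nondecreasing in `r` for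
each `s`. Integrating `g t ≤ t ^ p * (g r / r ^ p)` over `[0, r]` yields the bound on the
isoperimetric quotient. -/

open MeasureTheory Set

section MonotoneDivRpow

variable {g : ℝ → ℝ} {p r : ℝ}

theorem le_rpow_mul_of_monotoneOn_div_rpow
    (hmono : MonotoneOn (fun t => g t / t ^ p) (Ioi 0)) {t : ℝ} (ht : 0 < t) (htr : t ≤ r) :
    g t ≤ t ^ p * (g r / r ^ p) := by
  rw [← div_le_iff₀' (Real.rpow_pos_of_pos ht p)]
  exact hmono ht (ht.trans_le htr) htr

theorem intervalIntegrable_of_monotoneOn_div_rpow (hp : -1 < p) (hg : ∀ t > 0, 0 ≤ g t)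
    (hmono : MonotoneOn (fun t => g t / t ^ p) (Ioi 0)) (hr : 0 ≤ r) :
    IntervalIntegrable g volume 0 r := by
  rw [intervalIntegrable_iff_integrableOn_Ioc_of_le hr]
  have hdom : IntegrableOn (fun t : ℝ => t ^ p * (g r / r ^ p)) (Ioc 0 r) :=
    ((intervalIntegral.intervalIntegrable_rpow' hp).mul_const _).1
  have hmeas : AEStronglyMeasurable g (volume.restrict (Ioc 0 r)) := by
    have hquot : AEMeasurable (fun t => g t / t ^ p) (volume.restrict (Ioc 0 r)) :=
      aemeasurable_restrict_of_monotoneOn measurableSet_Ioc (hmono.mono Ioc_subset_Ioi_self)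
    refine (((measurable_id.pow_const p).aemeasurable.mul hquot).congr ?_).aestronglyMeasurable
    filter_upwards [ae_restrict_mem measurableSet_Ioc] with t ht
    exact mul_div_cancel₀ _ (Real.rpow_pos_of_pos ht.1 p).ne'
  refine hdom.mono' hmeas ?_
  filter_upwards [ae_restrict_mem measurableSet_Ioc] with t ht
  rw [Real.norm_of_nonneg (hg t ht.1)]
  exact le_rpow_mul_of_monotoneOn_div_rpow hmono ht.1 ht.2

theorem integral_div_rpow_add_one_eq_integral_comp_mul (g : ℝ → ℝ) (p : ℝ) (hr : 0 < r) :
    (∫ t in (0:ℝ)..r, g t) / r ^ (p + 1) = ∫ s in (0:ℝ)..1, g (r * s) / r ^ p := by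
  have hscale : r * ∫ s in (0:ℝ)..1, g (r * s) = ∫ t in (0:ℝ)..r, g t := by
    simpa only [mul_zero, mul_one] using
      intervalIntegral.mul_integral_comp_mul_left (a := 0) (b := 1) (f := g) r
  rw [intervalIntegral.integral_div, ← hscale, Real.rpow_add_one hr.ne', mul_comm r,
    mul_div_mul_right _ _ hr.ne']

theorem monotoneOn_integral_div_rpow_add_one
    (hint : ∀ r > 0, IntervalIntegrable g volume 0 r)
    (hmono : MonotoneOn (fun t => g t / t ^ p) (Ioi 0)) :
    MonotoneOn (fun r => (∫ t in (0:ℝ)..r, g t) / r ^ (p + 1)) (Ioi 0) := by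
  have hrescaled : ∀ r > 0, IntervalIntegrable (fun s => g (r * s) / r ^ p) volume 0 1 := by
    intro r hr
    have h := (hint r hr).comp_mul_left (c := r)
    rw [zero_div, div_self hr.ne'] at h
    exact h.div_const _
  intro a (ha : 0 < a) b (hb : 0 < b) hab
  simp only [integral_div_rpow_add_one_eq_integral_comp_mul, ha, hb]
  refine intervalIntegral.integral_mono_on_of_le_Ioo zero_le_one (hrescaled a ha) (hrescaled b hb)
    fun s ⟨hs, _⟩ => ?_
  have hquot : g (a * s) / (a * s) ^ p ≤ g (b * s) / (b * s) ^ p :=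
    hmono (mul_pos ha hs) (mul_pos hb hs) (mul_le_mul_of_nonneg_right hab hs.le)
  rw [Real.mul_rpow ha.le hs.le, Real.mul_rpow hb.le hs.le, ← div_div, ← div_div] at hquot
  exact (div_le_div_iff_of_pos_right (Real.rpow_pos_of_pos hs p)).1 hquot

theorem add_one_mul_integral_le_of_monotoneOn_div_rpow (hp : -1 < p) (hr : 0 < r)
    (hint : IntervalIntegrable g volume 0 r)
    (hmono : MonotoneOn (fun t => g t / t ^ p) (Ioi 0)) :
    (p + 1) * ∫ t in (0:ℝ)..r, g t ≤ r * g r := by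
  have hp' : 0 < p + 1 := by linarith
  have hle : ∫ t in (0:ℝ)..r, g t ≤ ∫ t in (0:ℝ)..r, t ^ p * (g r / r ^ p) :=
    intervalIntegral.integral_mono_on_of_le_Ioo hr.le hint
      ((intervalIntegral.intervalIntegrable_rpow' hp).mul_const _)
      fun t ht => le_rpow_mul_of_monotoneOn_div_rpow hmono ht.1 ht.2.le
  calc (p + 1) * ∫ t in (0:ℝ)..r, g t
      ≤ (p + 1) * ∫ t in (0:ℝ)..r, t ^ p * (g r / r ^ p) := by gcongr
    _ = (p + 1) * (r ^ (p + 1) / (p + 1) * (g r / r ^ p)) := by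
        rw [intervalIntegral.integral_mul_const, integral_rpow (Or.inl hp),
          Real.zero_rpow hp'.ne', sub_zero]
    _ = r * g r := by
        have hrp : r ^ p ≠ 0 := (Real.rpow_pos_of_pos hr p).ne'
        rw [Real.rpow_add_one hr.ne']
        field_simp

end MonotoneDivRpow

theorem monotoneOn_rpow_div_rpow {f : ℝ → ℝ} {q : ℝ} (hq : 0 ≤ q) (hf : ∀ t > 0, 0 ≤ f t)
    (hmono : MonotoneOn (fun t => f t / t) (Ioi 0)) :
    MonotoneOn (fun t => f t ^ q / t ^ q) (Ioi 0) := by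
  intro a (ha : 0 < a) b (hb : 0 < b) hab
  simp only [← Real.div_rpow (hf a ha) ha.le, ← Real.div_rpow (hf b hb) hb.le]
  exact Real.rpow_le_rpow (div_nonneg (hf a ha) ha.le) (hmono ha hb hab) hq

theorem monotoneOn_div_id_of_convexOn {f : ℝ → ℝ} (hf : ConvexOn ℝ (Ici 0) f) (hf0 : f 0 = 0) :
    MonotoneOn (fun t => f t / t) (Ioi 0) := by
  intro a (ha : 0 < a) b (hb : 0 < b) hab
  simpa only [hf0, sub_zero] using
    hf.secant_mono self_mem_Ici ha.le hb.le ha.ne' hb.ne' hab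

theorem convexOn_of_contDiffOn_of_deriv2_nonneg {D : Set ℝ} {f : ℝ → ℝ} (hD : Convex ℝ D)
    (hf : ContDiffOn ℝ 2 f D) (hf'' : ∀ x ∈ interior D, 0 ≤ deriv (deriv f) x) :
    ConvexOn ℝ D f := by
  have hinterior : ContDiffOn ℝ 2 f (interior D) := hf.mono interior_subset
  have hderiv : ContDiffOn ℝ 1 (deriv f) (interior D) :=
    hinterior.deriv_of_isOpen isOpen_interior one_add_one_eq_two.le
  exact convexOn_of_deriv2_nonneg hD hf.continuousOn (hinterior.differentiableOn two_ne_zero)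
    (hderiv.differentiableOn one_ne_zero) hf''

theorem stmt_11_general {n : ℝ} (hn : 1 ≤ n) {ψ : ℝ → ℝ}
    (hψ : MonotoneOn (fun t => ψ t / t) (Ioi 0)) (hψpos : ∀ r > 0, 0 < ψ r) :
    MonotoneOn (fun r => (∫ t in (0:ℝ)..r, ψ t ^ (n - 1)) / r ^ n) (Ioi 0) ∧
    ∀ r > 0, n / r ≤ ψ r ^ (n - 1) / ∫ t in (0:ℝ)..r, ψ t ^ (n - 1) := by
  have hpos : ∀ t > 0, 0 < ψ t ^ (n - 1) := fun t ht => Real.rpow_pos_of_pos (hψpos t ht) _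
  have hmono : MonotoneOn (fun t => ψ t ^ (n - 1) / t ^ (n - 1)) (Ioi 0) :=
    monotoneOn_rpow_div_rpow (sub_nonneg.2 hn) (fun t ht => (hψpos t ht).le) hψ
  have hexp : -1 < n - 1 := by linarith
  have hint : ∀ r > 0, IntervalIntegrable (fun t => ψ t ^ (n - 1)) volume 0 r := fun r hr =>
    intervalIntegrable_of_monotoneOn_div_rpow hexp (fun t ht => (hpos t ht).le) hmono hr.le
  refine ⟨by simpa only [sub_add_cancel] using monotoneOn_integral_div_rpow_add_one hint hmono,
    fun r hr => ?_⟩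
  have hvol : 0 < ∫ t in (0:ℝ)..r, ψ t ^ (n - 1) :=
    intervalIntegral.intervalIntegral_pos_of_pos_on (hint r hr) (fun t ht => hpos t ht.1) hr
  rw [div_le_div_iff₀ hr hvol, mul_comm _ r]
  simpa only [sub_add_cancel] using
    add_one_mul_integral_le_of_monotoneOn_div_rpow hexp hr (hint r hr) hmono

/-- For a Cartan–Hadamard warping function ψ and n ≥ 2, the function
f(r) = (∫₀^r ψ^{n-1})/r^n is monotone nondecreasing on (0,∞), and consequently the
isoperimetric quotient I(r) = ψ(r)^{n-1}/∫₀^r ψ^{n-1} satisfies I(r) ≥ n/r for r > 0. -/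
theorem stmt_11 (n : ℕ) (hn : 2 ≤ n) (ψ : ℝ → ℝ)
    (hψ : ContDiffOn ℝ (⊤ : ℕ∞) ψ (Set.Ici 0))
    (hψ0 : ψ 0 = 0) (hψ'0 : deriv ψ 0 = 1) (hψpos : ∀ r > (0:ℝ), 0 < ψ r)
    (hψ'' : ∀ r ≥ (0:ℝ), 0 ≤ deriv (deriv ψ) r) :
    MonotoneOn (fun r => (∫ t in (0:ℝ)..r, ψ t ^ (n - 1)) / r ^ n) (Set.Ioi 0) ∧
    ∀ r > (0:ℝ), (n:ℝ) / r ≤ ψ r ^ (n - 1) / ∫ t in (0:ℝ)..r, ψ t ^ (n - 1) := by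
  have hn1 : 1 ≤ n := one_le_two.trans hn
  have hconv : ConvexOn ℝ (Ici 0) ψ := convexOn_of_contDiffOn_of_deriv2_nonneg (convex_Ici 0)
    (contDiffOn_infty.1 hψ 2) fun r hr => hψ'' r (interior_subset hr)
  simpa only [← Nat.cast_pred hn1, Real.rpow_natCast] using
    stmt_11_general (Nat.one_le_cast.2 hn1) (monotoneOn_div_id_of_convexOn hconv hψ0) hψpos
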